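/- Let X₁, …, Xₙ be real numbers that are not all equal, and let 𝔽ₙ be their empirical distribution function. Then there exists a maximizer (θ̂ₙ, ψ̂ₙ) ∈ ℝ × SC₀ of Ψₙ(θ, ψ) = Ψ(θ, ψ, 𝔽ₙ), and moreover every maximizing value θ̂ₙ lies in the interval [minᵢ Xᵢ, maxᵢ Xᵢ]. -/

import Mathlib

open MeasureTheory Filter Set
open scoped ENNReal NNReal

noncomputable section

/-- `exp` of an extended real number, valued in `ℝ≥0∞`. -/
def expE (y : EReal) : ℝ≥0∞ :=
  if y = ⊥ then 0 else if y = ⊤ then ⊤ else ENNReal.ofReal (Real.exp y.toReal)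

/-- Truncation of an extended real number to `ℝ≥0∞` (negative values go to `0`). -/
def toENN (y : EReal) : ℝ≥0∞ :=
  if y = ⊤ then ⊤ else ENNReal.ofReal y.toReal

/-- Signed (upper-minus-lower) integral of an `EReal`-valued function against a measure. -/
def eIntegral (μ : Measure ℝ) (ψ : ℝ → EReal) : EReal :=
  ((∫⁻ x, toENN (ψ x) ∂μ : ℝ≥0∞) : EReal) - ((∫⁻ x, toENN (-(ψ x)) ∂μ : ℝ≥0∞) : EReal)

/-- Concavity for `EReal`-valued functions on `ℝ`. -/
def EConcave (ψ : ℝ → EReal) : Prop :=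
  ∀ x y : ℝ, ∀ t : ℝ, 0 ≤ t → t ≤ 1 →
    ((t : EReal) * ψ x + (((1 - t) : ℝ) : EReal) * ψ y) ≤ ψ (t * x + (1 - t) * y)

/-- The class `SC₀` of proper, closed (upper semicontinuous), concave functions
`ℝ → [−∞, ∞)` that are symmetric about `0`. -/
def memSC0 (ψ : ℝ → EReal) : Prop :=
  (∀ x, ψ x < ⊤) ∧ (∃ x, ψ x ≠ ⊥) ∧ UpperSemicontinuous ψ ∧ EConcave ψ ∧ ∀ x, ψ (-x) = ψ x

/-- The criterion function `Ψ(θ, ψ, F) = ∫ ψ(x − θ) dμ(x) − ∫ e^{ψ(x)} dx`. -/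
def Psi (θ : ℝ) (ψ : ℝ → EReal) (μ : Measure ℝ) : EReal :=
  eIntegral μ (fun x => ψ (x - θ)) - ((∫⁻ x, expE (ψ x) : ℝ≥0∞) : EReal)

/-- `L(θ; F) = sup_{ψ ∈ SC₀} Ψ(θ, ψ, F)`. -/
def Ltheta (θ : ℝ) (μ : Measure ℝ) : EReal :=
  ⨆ ψ ∈ {ψ : ℝ → EReal | memSC0 ψ}, Psi θ ψ μ

/-- `L(F) = sup_{θ ∈ ℝ, ψ ∈ SC₀} Ψ(θ, ψ, F)`. -/
def Lsup (μ : Measure ℝ) : EReal := ⨆ θ : ℝ, Ltheta θ μ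

/-- Condition A: `μ` is a probability measure that is not a point mass,
with a finite first absolute moment. -/
def CondA (μ : Measure ℝ) : Prop :=
  IsProbabilityMeasure μ ∧ (∀ x : ℝ, μ ≠ Measure.dirac x) ∧
    (∫⁻ x, ENNReal.ofReal |x| ∂μ) < ⊤

/-- The empirical measure of the data `X₁, …, Xₙ`. -/
def empMeas {n : ℕ} (X : Fin n → ℝ) : Measure ℝ :=
  ((n : ℝ≥0∞))⁻¹ • ∑ i : Fin n, Measure.dirac (X i)

/-- The empirical measure of the first `n` entries of a sequence. -/
def empSeq (X : ℕ → ℝ) (n : ℕ) : Measure ℝ :=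
  ((n : ℝ≥0∞))⁻¹ • ∑ i ∈ Finset.range n, Measure.dirac (X i)

/-- The density `e^ψ` as a real-valued function. -/
def gReal (ψ : ℝ → EReal) (x : ℝ) : ℝ := (expE (ψ x)).toReal

/-- A knot of a concave function `ψ`: a point where the left and right derivatives
differ, or a boundary point of `dom ψ = {ψ > −∞}`. -/
def IsKnot (ψ : ℝ → EReal) (x : ℝ) : Prop :=
  x ∈ frontier {y : ℝ | ψ y ≠ ⊥} ∨
    derivWithin (fun y => (ψ y).toReal) (Set.Iio x) x ≠
      derivWithin (fun y => (ψ y).toReal) (Set.Ioi x) x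

/-- The class `𝒞` of proper closed concave functions `ℝ → [−∞, ∞)`. -/
def memC (φ : ℝ → EReal) : Prop :=
  (∀ x, φ x < ⊤) ∧ (∃ x, φ x ≠ ⊥) ∧ UpperSemicontinuous φ ∧ EConcave φ

/-- The criterion function `ω(φ, F) = ∫ φ dμ − ∫ e^{φ(x)} dx`. -/
def omegaF (φ : ℝ → EReal) (μ : Measure ℝ) : EReal :=
  eIntegral μ φ - ((∫⁻ x, expE (φ x) : ℝ≥0∞) : EReal)

/-- `(θ, ψ)` maximizes `Ψ(·, ·, μ)` over `ℝ × SC₀`. -/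
def IsMaximizer (θ : ℝ) (ψ : ℝ → EReal) (μ : Measure ℝ) : Prop :=
  memSC0 ψ ∧ ∀ (θ' : ℝ) (ψ' : ℝ → EReal), memSC0 ψ' → Psi θ' ψ' μ ≤ Psi θ ψ μ

/-- Condition B: the `θ`-component of a maximizer of `Ψ(·, ·, μ)` is unique. -/
def CondB (μ : Measure ℝ) : Prop :=
  ∀ (θ₁ θ₂ : ℝ) (ψ₁ ψ₂ : ℝ → EReal),
    IsMaximizer θ₁ ψ₁ μ → IsMaximizer θ₂ ψ₂ μ → θ₁ = θ₂

/-- `J(F) = {x : 0 < F(x) < 1}`. -/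
def Jset (μ : Measure ℝ) : Set ℝ := {x : ℝ | 0 < μ (Set.Iic x) ∧ μ (Set.Iic x) < 1}

/-- The Hellinger distance between two densities. -/
def Hdist (f g : ℝ → ℝ) : ℝ :=
  Real.sqrt ((1 / 2) * ∫ x, (Real.sqrt (f x) - Real.sqrt (g x)) ^ 2)

/-- Finite Fisher information for location: `g` is a.e. differentiable with
square-integrable score. -/
def FiniteFisher (g : ℝ → ℝ) : Prop :=
  ∃ D : ℝ → ℝ, (∀ᵐ x : ℝ, HasDerivAt g (D x) x) ∧
    (∫⁻ x, ENNReal.ofReal ((D x) ^ 2 / g x)) < ⊤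

/-- The symmetrization `μ^{sym}_θ = (μ + R_θ#μ)/2` of a measure about `θ`. -/
def symMeas (θ : ℝ) (μ : Measure ℝ) : Measure ℝ :=
  ((2 : ℝ≥0∞))⁻¹ • (μ + Measure.map (fun x => 2 * θ - x) μ)

end

/-!
Fix `θ` and heights `v i`. Among the functions of `SC₀` that are at least `v i` at `X i - θ`, the
least is the tent function, the upper boundary of the convex hull of the points
`(± (X i - θ), v i)`. It loses nothing in the first term of `Ψₙ` and has the smallest mass, so
maximizing `Ψₙ` amounts to maximizing the profile `n⁻¹ ∑ᵢ v i - ∫ e^tent` over the pairs `(θ, v)`.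

The mass of the tent function is lower semicontinuous in the data, so the profile is upper
semicontinuous. It is also coercive in `v`, uniformly in `θ`: two distinct data are not both close
to `θ`, so a concave function with a high peak has a large mass unless some height is very low, and
then the mean of the heights is low too. Hence the profile attains its maximum for `θ` restricted
to `[minᵢ Xᵢ, maxᵢ Xᵢ]`.

If `θ` is outside this interval, move it to the nearest endpoint and keep the heights. The datum at
the opposite endpoint gets closer to `θ`, so the support of the tent function is strictly smaller
than that of the original `ψ`: mass is lost, and the criterion strictly increases.
-/

open scoped Topology Pointwise

lemma expE_eq_exp : expE = EReal.exp := by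
  ext y
  induction y using EReal.rec <;> simp [expE]

lemma expE_coe (r : ℝ) : expE r = ENNReal.ofReal (Real.exp r) := by
  rw [expE_eq_exp, EReal.exp_coe]

lemma expE_mono : Monotone expE :=
  expE_eq_exp ▸ EReal.exp_monotone

lemma toENN_coe (r : ℝ) : toENN r = ENNReal.ofReal r := by
  simp [toENN]

lemma lintegral_comp_mul_left (f : ℝ → ℝ≥0∞) {a : ℝ} (ha : a ≠ 0) :
    ∫⁻ x, f (a * x) = ENNReal.ofReal |a⁻¹| * ∫⁻ x, f x := by
  rw [← (measurableEmbedding_mulLeft₀ ha).lintegral_map, Real.map_volume_mul_left ha,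
    lintegral_smul_measure, smul_eq_mul]

/-- The set of points of the plane on or below the graph of `φ`. The ordinates are real, so that
the ambient space is a vector space although `φ` takes extended real values. -/
def hypograph (φ : ℝ → EReal) : Set (ℝ × ℝ) :=
  {p | (p.2 : EReal) ≤ φ p.1}

@[simp]
lemma mem_hypograph {φ : ℝ → EReal} {x s : ℝ} : (x, s) ∈ hypograph φ ↔ (s : EReal) ≤ φ x :=
  Iff.rfl

lemma EConcave.convex_hypograph {φ : ℝ → EReal} (hφ : EConcave φ) : Convex ℝ (hypograph φ) := by
  rintro ⟨x, s⟩ hx ⟨y, r⟩ hy a b ha hb hab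
  obtain rfl : b = 1 - a := by linarith
  calc ((a * s + (1 - a) * r : ℝ) : EReal)
      = (a : EReal) * s + ((1 - a : ℝ) : EReal) * r := by norm_cast
    _ ≤ (a : EReal) * φ x + ((1 - a : ℝ) : EReal) * φ y :=
        add_le_add (mul_le_mul_of_nonneg_left hx (by exact_mod_cast ha))
          (mul_le_mul_of_nonneg_left hy (by exact_mod_cast hb))
    _ ≤ φ (a * x + (1 - a) * y) := hφ x y a ha (by linarith)

lemma econcave_of_convex_hypograph {φ : ℝ → EReal} (htop : ∀ x, φ x < ⊤)
    (h : Convex ℝ (hypograph φ)) : EConcave φ := by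
  intro x y t ht0 ht1
  rcases ht0.eq_or_lt with rfl | ht0'
  · simp
  rcases ht1.eq_or_lt with rfl | ht1'
  · simp
  by_cases hx : φ x = ⊥
  · simp [hx, EReal.coe_mul_bot_of_pos ht0']
  by_cases hy : φ y = ⊥
  · rw [hy, EReal.coe_mul_bot_of_pos (sub_pos.2 ht1'), EReal.add_bot]
    exact bot_le
  lift φ x to ℝ using ⟨(htop x).ne, hx⟩ with s hs
  lift φ y to ℝ using ⟨(htop y).ne, hy⟩ with r hr
  have hmem : (t * x + (1 - t) * y, t * s + (1 - t) * r) ∈ hypograph φ :=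
    h (mem_hypograph.2 hs.le) (mem_hypograph.2 hr.le) ht0 (sub_nonneg.2 ht1) (by ring)
  exact_mod_cast mem_hypograph.1 hmem

lemma upperSemicontinuous_of_isClosed_hypograph {φ : ℝ → EReal} (htop : ∀ x, φ x < ⊤)
    (h : IsClosed (hypograph φ)) : UpperSemicontinuous φ := by
  rw [upperSemicontinuous_iff_isClosed_preimage]
  intro y
  induction y using EReal.rec with
  | bot => simp
  | top =>
    have hempty : φ ⁻¹' Ici ⊤ = ∅ := by ext x; simp [(htop x).ne]
    exact hempty ▸ isClosed_empty
  | coe s => exact h.preimage (continuous_id.prodMk continuous_const : Continuous fun x => (x, s))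

namespace memSC0

variable {ψ : ℝ → EReal}

lemma measurable_expE (hψ : memSC0 ψ) : Measurable fun x => expE (ψ x) :=
  expE_mono.measurable.comp hψ.2.2.1.measurable

lemma convex_hypograph (hψ : memSC0 ψ) : Convex ℝ (hypograph ψ) :=
  hψ.2.2.2.1.convex_hypograph

lemma apply_neg (hψ : memSC0 ψ) (x : ℝ) : ψ (-x) = ψ x :=
  hψ.2.2.2.2 x

lemma convex_superlevel (hψ : memSC0 ψ) (s : ℝ) : Convex ℝ {x | (s : EReal) ≤ ψ x} := by
  intro x hx y hy a b ha hb hab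
  have hmem := hψ.convex_hypograph (mem_hypograph.2 hx) (mem_hypograph.2 hy) ha hb hab
  simpa [hypograph, ← add_mul, hab] using hmem

lemma apply_le_of_abs_le (hψ : memSC0 ψ) {x y : ℝ} (hxy : |x| ≤ |y|) : ψ y ≤ ψ x := by
  refine EReal.ge_of_forall_gt_iff_ge.1 fun s hs => ?_
  have hneg : (s : EReal) ≤ ψ (-y) := by rw [hψ.apply_neg]; exact hs.le
  refine (hψ.convex_superlevel s).ordConnected.uIcc_subset hneg hs.le (mem_uIcc.2 ?_)
  rw [abs_le] at hxy
  rcases abs_cases y with ⟨h, -⟩ | ⟨h, -⟩ <;> rw [h] at hxy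
  · exact .inl hxy
  · exact .inr (by simpa using hxy)

lemma ofReal_mul_exp_le_lintegral (hψ : memSC0 ψ) {x r : ℝ} (hx : 0 ≤ x) (hr : (r : EReal) ≤ ψ x) :
    ENNReal.ofReal (2 * x * Real.exp r) ≤ ∫⁻ z, expE (ψ z) :=
  calc ENNReal.ofReal (2 * x * Real.exp r)
      = ∫⁻ _ in Icc (-x) x, ENNReal.ofReal (Real.exp r) := by
        rw [setLIntegral_const, Real.volume_Icc, mul_comm, ENNReal.ofReal_mul (Real.exp_pos r).le,
          sub_neg_eq_add, two_mul]
    _ ≤ ∫⁻ z in Icc (-x) x, expE (ψ z) := by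
        refine setLIntegral_mono hψ.measurable_expE fun z hz => ?_
        rw [← expE_coe]
        exact expE_mono (hr.trans (hψ.apply_le_of_abs_le (by rwa [abs_of_nonneg hx, abs_le])))
    _ ≤ ∫⁻ z, expE (ψ z) := setLIntegral_le_lintegral _ _

/-- Concavity keeps `ψ` above `b - 1` on `[0, x / (1 + b - a)]`. -/
lemma ofReal_mul_exp_div_le_lintegral (hψ : memSC0 ψ) {x a b : ℝ} (hx : 0 ≤ x) (hab : a ≤ b)
    (hb : (b : EReal) ≤ ψ 0) (ha : (a : EReal) ≤ ψ x) :
    ENNReal.ofReal (2 * x * Real.exp (b - 1) / (1 + b - a)) ≤ ∫⁻ z, expE (ψ z) := by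
  set u := 1 + b - a with hu
  have hu1 : 1 ≤ u := by rw [hu]; linarith
  have hu0 : 0 < u := by linarith
  have hmem : (x / u, b - (b - a) / u) ∈ hypograph ψ := by
    have hcomb := hψ.convex_hypograph (mem_hypograph.2 hb) (mem_hypograph.2 ha)
      (sub_nonneg.2 (inv_le_one_of_one_le₀ hu1)) (inv_nonneg.2 hu0.le) (by ring)
    convert hcomb using 1
    ext <;> simp <;> ring
  have hdrop : b - 1 ≤ b - (b - a) / u := by
    have : (b - a) / u ≤ 1 := (div_le_one hu0).2 (by linarith)
    linarith
  calc ENNReal.ofReal (2 * x * Real.exp (b - 1) / u)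
      = ENNReal.ofReal (2 * (x / u) * Real.exp (b - 1)) := by ring_nf
    _ ≤ ∫⁻ z, expE (ψ z) := hψ.ofReal_mul_exp_le_lintegral (by positivity)
        ((EReal.coe_le_coe_iff.2 hdrop).trans hmem)

end memSC0

/-- The extended real function whose graph is the upper boundary of `K`, with value `⊥` at the
abscissae that `K` misses. -/
noncomputable def upperBoundary (K : Set (ℝ × ℝ)) (x : ℝ) : EReal :=
  sSup ((↑) '' {s : ℝ | (x, s) ∈ K})

section upperBoundary

variable {K : Set (ℝ × ℝ)}

lemma coe_le_upperBoundary {x s : ℝ} (h : (x, s) ∈ K) :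
    (s : EReal) ≤ upperBoundary K x :=
  le_sSup ⟨s, h, rfl⟩

lemma upperBoundary_le {x : ℝ} {y : EReal}
    (h : ∀ s : ℝ, (x, s) ∈ K → (s : EReal) ≤ y) : upperBoundary K x ≤ y :=
  sSup_le (forall_mem_image.2 h)

lemma upperBoundary_eq_bot {x : ℝ} (h : ∀ s, (x, s) ∉ K) :
    upperBoundary K x = ⊥ :=
  le_bot_iff.1 (upperBoundary_le fun s hs => absurd hs (h s))

lemma coe_le_upperBoundary_iff (hK : IsCompact K) {x s : ℝ} :
    (s : EReal) ≤ upperBoundary K x ↔ ∃ r, s ≤ r ∧ (x, r) ∈ K := by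
  refine ⟨fun h => ?_, fun ⟨r, hsr, hr⟩ =>
    (EReal.coe_le_coe_iff.2 hsr).trans (coe_le_upperBoundary hr)⟩
  have hfiber : IsCompact {r : ℝ | (x, r) ∈ K} :=
    (hK.image continuous_snd).of_isClosed_subset
      (hK.isClosed.preimage (continuous_const.prodMk continuous_id)) fun r hr => ⟨(x, r), hr, rfl⟩
  have hne : {r : ℝ | (x, r) ∈ K}.Nonempty := by
    by_contra hempty
    simp [upperBoundary, not_nonempty_iff_eq_empty.1 hempty] at h
  obtain ⟨r, hr, hrsup⟩ :=
    (hfiber.image continuous_coe_real_ereal).sSup_mem (hne.image _)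
  exact ⟨r, EReal.coe_le_coe_iff.1 (h.trans hrsup.ge), hr⟩

lemma hypograph_upperBoundary (hK : IsCompact K) :
    hypograph (upperBoundary K) = K + {0} ×ˢ Iic 0 := by
  ext ⟨x, s⟩
  rw [mem_hypograph, coe_le_upperBoundary_iff hK, Set.mem_add]
  constructor
  · rintro ⟨r, hsr, hr⟩
    exact ⟨(x, r), hr, (0, s - r), by simpa using hsr, by simp⟩
  · rintro ⟨⟨x', r⟩, hr, ⟨z, d⟩, ⟨rfl : z = 0, hd : d ≤ 0⟩, hsum⟩
    obtain ⟨rfl, rfl⟩ := Prod.mk.inj hsum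
    exact ⟨r, by simpa using hd, by simpa using hr⟩

lemma upperBoundary_lt_top (hK : IsCompact K) (x : ℝ) : upperBoundary K x < ⊤ := by
  obtain ⟨M, hM⟩ := (hK.image continuous_snd).bddAbove
  refine (upperBoundary_le fun s hs => ?_).trans_lt (EReal.coe_lt_top M)
  exact EReal.coe_le_coe_iff.2 (hM ⟨_, hs, rfl⟩)

lemma memSC0_upperBoundary (hK : IsCompact K) (hconv : Convex ℝ K) (hne : K.Nonempty)
    (hsymm : ∀ x s, (x, s) ∈ K → (-x, s) ∈ K) : memSC0 (upperBoundary K) := by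
  have htop := upperBoundary_lt_top hK
  obtain ⟨⟨x, s⟩, hxs⟩ := hne
  refine ⟨htop, ⟨x, ((EReal.bot_lt_coe s).trans_le (coe_le_upperBoundary hxs)).ne'⟩,
    upperSemicontinuous_of_isClosed_hypograph htop ?_,
    econcave_of_convex_hypograph htop ?_, fun x => ?_⟩
  · rw [hypograph_upperBoundary hK]
    exact (isClosed_singleton.prod isClosed_Iic).add_left_of_isCompact hK
  · rw [hypograph_upperBoundary hK]
    exact hconv.add ((convex_singleton 0).prod (convex_Iic 0))
  · exact le_antisymm
      (upperBoundary_le fun s hs => coe_le_upperBoundary (neg_neg x ▸ hsymm _ s hs))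
      (upperBoundary_le fun s hs => coe_le_upperBoundary (hsymm _ s hs))

end upperBoundary

/-- The convex hull of the points `(± y i, v i)`. -/
def symmHull {ι : Type*} (y v : ι → ℝ) : Set (ℝ × ℝ) :=
  convexHull ℝ (range (fun i => (y i, v i)) ∪ range fun i => (-y i, v i))

/-- The tent function over the data: the least element of `SC₀` that is at least `v i` at `y i` for
every `i`. Its graph is the upper boundary of `symmHull y v`. -/
noncomputable def tent {ι : Type*} (y v : ι → ℝ) : ℝ → EReal :=
  upperBoundary (symmHull y v)

/-- The integral `∫ e^ψ` of the tent function `ψ` over the data, as a real number. -/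
noncomputable def tentMass {ι : Type*} (y v : ι → ℝ) : ℝ :=
  (∫⁻ x, expE (tent y v x)).toReal

section tent

variable {ι : Type*} {y v : ι → ℝ}

lemma symmHull_subset {C : Set (ℝ × ℝ)} (hC : Convex ℝ C) (hpos : ∀ i, (y i, v i) ∈ C)
    (hneg : ∀ i, (-y i, v i) ∈ C) : symmHull y v ⊆ C :=
  convexHull_min (union_subset (range_subset_iff.2 hpos) (range_subset_iff.2 hneg)) hC

lemma mem_symmHull (y v : ι → ℝ) (i : ι) : (y i, v i) ∈ symmHull y v :=
  subset_convexHull ℝ _ (.inl ⟨i, rfl⟩)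

lemma neg_mem_symmHull (y v : ι → ℝ) (i : ι) : (-y i, v i) ∈ symmHull y v :=
  subset_convexHull ℝ _ (.inr ⟨i, rfl⟩)

lemma convex_symmHull (y v : ι → ℝ) : Convex ℝ (symmHull y v) :=
  convex_convexHull ℝ _

lemma symmHull_neg_fst {x s : ℝ} (h : (x, s) ∈ symmHull y v) : (-x, s) ∈ symmHull y v := by
  have hreflect : Convex ℝ ((LinearMap.prodMap (-.id) .id : ℝ × ℝ →ₗ[ℝ] ℝ × ℝ) ⁻¹' symmHull y v) :=
    (convex_symmHull y v).linear_preimage _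
  exact symmHull_subset hreflect (neg_mem_symmHull y v)
    (fun i => by simpa using mem_symmHull y v i) h

lemma le_tent (y v : ι → ℝ) (i : ι) : (v i : EReal) ≤ tent y v (y i) :=
  coe_le_upperBoundary (mem_symmHull y v i)

lemma tent_le_coe {M : ℝ} (hv : ∀ i, v i ≤ M) (x : ℝ) : tent y v x ≤ M :=
  upperBoundary_le fun _ hs => EReal.coe_le_coe_iff.2
    (symmHull_subset (convex_univ.prod (convex_Iic M)) (fun i => ⟨trivial, hv i⟩)
      (fun i => ⟨trivial, hv i⟩) hs).2

lemma tent_eq_bot {a x : ℝ} (hy : ∀ i, |y i| ≤ a) (hx : a < |x|) : tent y v x = ⊥ := by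
  refine upperBoundary_eq_bot fun s hs => hx.not_ge (abs_le.2 ?_)
  exact (symmHull_subset ((convex_Icc (-a) a).prod convex_univ)
    (fun i => ⟨abs_le.1 (hy i), trivial⟩)
    (fun i => ⟨abs_le.1 ((abs_neg (y i)).trans_le (hy i)), trivial⟩) hs).1

lemma tent_add_le {ψ : ℝ → EReal} (hψ : memSC0 ψ) {a c : ℝ}
    (h : ∀ i, ((v i + c : ℝ) : EReal) ≤ ψ (a * y i)) (x : ℝ) : tent y v x + c ≤ ψ (a * x) := by
  have hconv : Convex ℝ {p : ℝ × ℝ | (a * p.1, p.2 + c) ∈ hypograph ψ} := by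
    have := (hψ.convex_hypograph.translate_preimage_left (0, c)).linear_preimage
      (LinearMap.prodMap (a • .id) .id)
    simpa [preimage] using this
  refine EReal.add_le_of_le_sub (upperBoundary_le fun s hs => ?_)
  rw [EReal.le_sub_iff_add_le (by simp) (by simp)]
  refine symmHull_subset hconv h (fun i => ?_) hs
  rw [mem_ofPred_eq, mul_neg, mem_hypograph, hψ.apply_neg]
  exact h i

lemma ofReal_mul_lintegral_expE_tent_le {ψ : ℝ → EReal} (hψ : memSC0 ψ) {a c : ℝ} (ha : 0 < a)
    (h : ∀ i, ((v i + c : ℝ) : EReal) ≤ ψ (a * y i)) :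
    ENNReal.ofReal (a * Real.exp c) * ∫⁻ x, expE (tent y v x) ≤ ∫⁻ x, expE (ψ x) := by
  have hpointwise (x : ℝ) :
      ENNReal.ofReal (Real.exp c) * expE (tent y v x) ≤ expE (ψ (a * x)) := by
    rw [mul_comm, ← expE_coe]
    simpa only [expE_eq_exp, EReal.exp_add] using expE_mono (tent_add_le hψ h x)
  calc ENNReal.ofReal (a * Real.exp c) * ∫⁻ x, expE (tent y v x)
      = ENNReal.ofReal a * ∫⁻ x, ENNReal.ofReal (Real.exp c) * expE (tent y v x) := by
        rw [ENNReal.ofReal_mul ha.le, mul_assoc, lintegral_const_mul' _ _ ENNReal.ofReal_ne_top]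
    _ ≤ ENNReal.ofReal a * ∫⁻ x, expE (ψ (a * x)) := by gcongr with x; exact hpointwise x
    _ = ∫⁻ x, expE (ψ x) := by
        rw [lintegral_comp_mul_left (fun x => expE (ψ x)) ha.ne', ← mul_assoc,
          ← ENNReal.ofReal_mul ha.le, abs_of_pos (inv_pos.2 ha), mul_inv_cancel₀ ha.ne',
          ENNReal.ofReal_one, one_mul]

lemma mul_exp_mul_tentMass_le {ψ : ℝ → EReal} (hψ : memSC0 ψ) (hI : ∫⁻ x, expE (ψ x) ≠ ⊤)
    {a c : ℝ} (ha : 0 < a) (h : ∀ i, ((v i + c : ℝ) : EReal) ≤ ψ (a * y i)) :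
    a * Real.exp c * tentMass y v ≤ (∫⁻ x, expE (ψ x)).toReal := by
  have hle := ENNReal.toReal_mono hI (ofReal_mul_lintegral_expE_tent_le hψ ha h)
  rwa [ENNReal.toReal_mul, ENNReal.toReal_ofReal (by positivity)] at hle

lemma tent_le {ψ : ℝ → EReal} (hψ : memSC0 ψ) (h : ∀ i, (v i : EReal) ≤ ψ (y i)) (x : ℝ) :
    tent y v x ≤ ψ x := by
  simpa using tent_add_le hψ (a := 1) (c := 0) (by simpa using h) x

lemma tentMass_le {ψ : ℝ → EReal} (hψ : memSC0 ψ) (hI : ∫⁻ x, expE (ψ x) ≠ ⊤)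
    (h : ∀ i, (v i : EReal) ≤ ψ (y i)) : tentMass y v ≤ (∫⁻ x, expE (ψ x)).toReal :=
  ENNReal.toReal_mono hI (lintegral_mono fun x => expE_mono (tent_le hψ h x))

lemma memSC0_tent [Finite ι] [Nonempty ι] (y v : ι → ℝ) : memSC0 (tent y v) :=
  memSC0_upperBoundary (((finite_range _).union (finite_range _)).isCompact_convexHull ℝ)
    (convex_symmHull y v) ⟨_, mem_symmHull y v (Classical.arbitrary ι)⟩
    fun _ _ => symmHull_neg_fst

lemma lintegral_expE_tent_ne_top [Finite ι] (y v : ι → ℝ) : ∫⁻ x, expE (tent y v x) ≠ ⊤ := by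
  cases nonempty_fintype ι
  have hbound (x : ℝ) : expE (tent y v x) ≤
      (Icc (-‖y‖) ‖y‖).indicator (fun _ => ENNReal.ofReal (Real.exp ‖v‖)) x := by
    by_cases hx : |x| ≤ ‖y‖
    · have hmem : x ∈ Icc (-‖y‖) ‖y‖ := abs_le.1 hx
      rw [indicator_of_mem hmem, ← expE_coe]
      exact expE_mono (tent_le_coe (fun i => (le_abs_self _).trans (norm_le_pi_norm v i)) x)
    · rw [tent_eq_bot (norm_le_pi_norm y) (not_le.1 hx)]
      simp [expE]
  refine ((lintegral_mono hbound).trans_lt ?_).ne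
  rw [lintegral_indicator_const measurableSet_Icc, Real.volume_Icc]
  exact ENNReal.mul_lt_top ENNReal.ofReal_lt_top ENNReal.ofReal_lt_top

lemma tentMass_lt [Nonempty ι] {ψ : ℝ → EReal} (hψ : memSC0 ψ)
    (hI : ∫⁻ x, expE (ψ x) ≠ ⊤) (h : ∀ i, (v i : EReal) ≤ ψ (y i)) {a z : ℝ}
    (hy : ∀ i, |y i| ≤ a) (hz : a < |z|) (hbot : ψ z ≠ ⊥) :
    tentMass y v < (∫⁻ x, expE (ψ x)).toReal := by
  have hle := fun x => expE_mono (tent_le hψ h x)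
  have hfin : ∫⁻ x, expE (tent y v x) ≠ ⊤ := ne_top_of_le_ne_top hI (lintegral_mono hle)
  have ha : 0 ≤ a := (abs_nonneg _).trans (hy (Classical.arbitrary ι))
  refine (ENNReal.toReal_lt_toReal hfin hI).2 <|
    lintegral_strict_mono_of_ae_le_of_ae_lt_on (s := Ioo a |z|) hψ.measurable_expE.aemeasurable hfin
      (.of_forall hle) (by simp [hz]) (.of_forall fun x hx => ?_)
  have hpos : ψ x ≠ ⊥ := fun hx' => hbot <| le_bot_iff.1 <| hx' ▸
    hψ.apply_le_of_abs_le (by rw [abs_of_pos (ha.trans_lt hx.1)]; exact hx.2.le)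
  rw [tent_eq_bot hy (hx.1.trans_le (le_abs_self x))]
  simpa [expE_eq_exp, bot_lt_iff_ne_bot] using hpos

/-- If every height drops by at most `-log t` and every abscissa shrinks by at most the factor `t`,
the mass drops by at most the factor `t ^ 2`; near given data this holds for each `t < 1`. -/
lemma lowerSemicontinuous_tentMass [Finite ι] [Nonempty ι] :
    LowerSemicontinuous fun p : (ι → ℝ) × (ι → ℝ) => tentMass p.1 p.2 := by
  rintro ⟨y, v⟩ m hm
  have hlim : Tendsto (fun t : ℝ => t * t * tentMass y v) (𝓝[<] 1) (𝓝 (tentMass y v)) := by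
    have hcont : Continuous fun t : ℝ => t * t * tentMass y v := by fun_prop
    simpa using (hcont.tendsto 1).mono_left nhdsWithin_le_nhds
  obtain ⟨t, hmt, ht0, ht1⟩ :=
    ((hlim.eventually_const_lt hm).and (Ioo_mem_nhdsLT one_pos)).exists
  have habscissa (i : ι) : ∀ᶠ q : (ι → ℝ) × (ι → ℝ) in 𝓝 (y, v), |t * y i| ≤ |q.1 i| := by
    rcases eq_or_ne (y i) 0 with hi | hi
    · simp [hi]
    · have hlt : |t * y i| < |y i| := by
        rw [abs_mul, abs_of_pos ht0]
        exact mul_lt_of_lt_one_left (abs_pos.2 hi) ht1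
      have hcont : Continuous fun q : (ι → ℝ) × (ι → ℝ) => |q.1 i| := by fun_prop
      exact ((hcont.tendsto (y, v)).eventually_const_lt hlt).mono fun _ => le_of_lt
  have hheight (i : ι) : ∀ᶠ q : (ι → ℝ) × (ι → ℝ) in 𝓝 (y, v), v i + Real.log t ≤ q.2 i := by
    have hlt : v i + Real.log t < v i := add_lt_of_neg_right _ (Real.log_neg ht0 ht1)
    have hcont : Continuous fun q : (ι → ℝ) × (ι → ℝ) => q.2 i := by fun_prop
    exact ((hcont.tendsto (y, v)).eventually_const_lt hlt).mono fun _ => le_of_lt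
  filter_upwards [eventually_all.2 habscissa, eventually_all.2 hheight] with q hq₁ hq₂
  have hle : t * Real.exp (Real.log t) * tentMass y v ≤ tentMass q.1 q.2 :=
    mul_exp_mul_tentMass_le (memSC0_tent q.1 q.2) (lintegral_expE_tent_ne_top q.1 q.2) ht0 fun i =>
      calc ((v i + Real.log t : ℝ) : EReal) ≤ q.2 i := EReal.coe_le_coe_iff.2 (hq₂ i)
        _ ≤ tent q.1 q.2 (q.1 i) := le_tent q.1 q.2 i
        _ ≤ tent q.1 q.2 (t * y i) := (memSC0_tent q.1 q.2).apply_le_of_abs_le (hq₁ i)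
  rw [Real.exp_log ht0] at hle
  exact hmt.trans_le hle

lemma mul_exp_div_le_tentMass [Finite ι] (y : ι → ℝ) {v : ι → ℝ} {p : ι} (hp : ∀ i, v p ≤ v i)
    (q i j : ι) :
    |y i - y j| * Real.exp (v q - 1) / (1 + v q - v p) ≤ tentMass y v := by
  have : Nonempty ι := ⟨q⟩
  have htent := memSC0_tent y v
  obtain ⟨k, hk⟩ : ∃ k, |y i - y j| / 2 ≤ |y k| := by
    by_contra! hlt
    linarith [abs_sub (y i) (y j), hlt i, hlt j]
  have hq : (v q : EReal) ≤ tent y v 0 :=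
    (le_tent y v q).trans (htent.apply_le_of_abs_le (by simp))
  have hp' : (v p : EReal) ≤ tent y v (|y i - y j| / 2) :=
    calc (v p : EReal) ≤ v k := EReal.coe_le_coe_iff.2 (hp k)
      _ ≤ tent y v (y k) := le_tent y v k
      _ ≤ tent y v (|y i - y j| / 2) :=
        htent.apply_le_of_abs_le (by rwa [abs_of_nonneg (by positivity)])
  have hle := htent.ofReal_mul_exp_div_le_lintegral (by positivity) (hp q) hq hp'
  rw [mul_div_cancel₀ _ (two_ne_zero' ℝ)] at hle
  exact (ENNReal.ofReal_le_iff_le_toReal (lintegral_expE_tent_ne_top y v)).1 hle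

end tent

lemma exists_forall_le_of_mul_exp_le {c : ℝ} (hc : 0 < c) (N : ℝ) :
    ∃ T, ∀ t : ℝ, 0 ≤ t → c * Real.exp t ≤ t * (1 + t * N) → t ≤ T := by
  refine ⟨max 1 (6 * (1 + N) / c), fun t ht0 h => ?_⟩
  by_contra! hlt
  have ht1 : 1 ≤ t := (le_max_left _ _).trans hlt.le
  have hcubic : t ^ 3 / 6 ≤ Real.exp t := by
    simpa [Nat.factorial] using Real.pow_div_factorial_le_exp t ht0 3
  have hlarge : 6 * (1 + N) < t * c := (div_lt_iff₀ hc).1 ((le_max_right _ _).trans_lt hlt)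
  have hle : c * (t ^ 3 / 6) ≤ t ^ 2 * (1 + N) :=
    calc c * (t ^ 3 / 6) ≤ c * Real.exp t := by gcongr
      _ ≤ t * (1 + t * N) := h
      _ ≤ t ^ 2 * (1 + N) := by nlinarith
  linarith [mul_lt_mul_of_pos_left hlarge (by positivity : 0 < t ^ 2)]

/-- With `t = b - M`, the hypothesis gives `b - a ≤ t * N` and bounds `exp t` by a polynomial
in `t`. -/
lemma exists_forall_le_of_le_sub_exp {N D : ℝ} (hN : 0 < N) (hD : 0 < D) (M : ℝ) :
    ∃ C, ∀ a b : ℝ, a ≤ b → M ≤ b - (b - a) / N - D * Real.exp (b - 1) / (1 + b - a) →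
      -C ≤ a ∧ b ≤ C := by
  obtain ⟨T, hT⟩ := exists_forall_le_of_mul_exp_le (c := D * Real.exp (M - 1)) (by positivity) N
  refine ⟨|M| + (1 + N) * T, fun a b hab h => ?_⟩
  have hdiff : b - a ≤ (b - M) * N := by
    have : 0 ≤ D * Real.exp (b - 1) / (1 + b - a) := div_nonneg (by positivity) (by linarith)
    rw [← div_le_iff₀ hN]
    linarith
  have ht0 : 0 ≤ b - M := nonneg_of_mul_nonneg_left (by linarith) hN
  have htT : b - M ≤ T := hT (b - M) ht0 <|
    calc D * Real.exp (M - 1) * Real.exp (b - M) = D * Real.exp (b - 1) := by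
          rw [mul_assoc, ← Real.exp_add]; ring_nf
      _ ≤ (b - M) * (1 + b - a) := by
          have : 0 ≤ (b - a) / N := div_nonneg (by linarith) hN.le
          rw [← div_le_iff₀ (by linarith)]
          linarith
      _ ≤ (b - M) * (1 + (b - M) * N) := by gcongr; linarith
  have hNT : (b - M) * N ≤ T * N := by gcongr
  have hNT0 : 0 ≤ T * N := mul_nonneg (ht0.trans htT) hN.le
  exact ⟨by linarith [neg_abs_le M], by linarith [le_abs_self M, hNT0]⟩

section profile

variable {ι : Type*} [Fintype ι]

lemma mean_le_sub_div {v : ι → ℝ} {q : ι} (hq : ∀ i, v i ≤ v q) (p : ι) :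
    (Fintype.card ι : ℝ)⁻¹ * ∑ i, v i ≤ v q - (v q - v p) / Fintype.card ι := by
  have : Nonempty ι := ⟨q⟩
  have hgap : v q - v p ≤ ∑ i, (v q - v i) :=
    Finset.single_le_sum (f := fun i => v q - v i) (fun i _ => sub_nonneg.2 (hq i))
      (Finset.mem_univ p)
  rw [Finset.sum_sub_distrib, Finset.sum_const, Finset.card_univ, nsmul_eq_mul] at hgap
  field_simp
  linarith

/-- The greatest value of `n⁻¹ ∑ᵢ v i - ∫ e^ψ` over the `ψ ∈ SC₀` with `v i ≤ ψ (X i - θ)` for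
every `i`, where `n` is the number of data. It is attained at the tent function, so maximizing the
criterion function amounts to maximizing this function of finitely many real variables. -/
noncomputable def profile (X : ι → ℝ) (θ : ℝ) (v : ι → ℝ) : ℝ :=
  (Fintype.card ι : ℝ)⁻¹ * ∑ i, v i - tentMass (fun i => X i - θ) v

lemma upperSemicontinuous_profile [Nonempty ι] (X : ι → ℝ) :
    UpperSemicontinuous fun p : ℝ × (ι → ℝ) => profile X p.1 p.2 := by
  have hmean : Continuous fun p : ℝ × (ι → ℝ) => (Fintype.card ι : ℝ)⁻¹ * ∑ i, p.2 i := by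
    fun_prop
  have hcentre : Continuous fun p : ℝ × (ι → ℝ) => ((fun i => X i - p.1 : ι → ℝ), p.2) := by
    fun_prop
  have hmass := lowerSemicontinuous_tentMass.comp hcentre
  have hneg := continuous_neg.comp_lowerSemicontinuous_antitone hmass fun _ _ => neg_le_neg
  exact hmean.upperSemicontinuous.add hneg

lemma exists_norm_le_of_le_profile {X : ι → ℝ} {i j : ι} (hij : X i ≠ X j) (M : ℝ) :
    ∃ C, ∀ θ v, M ≤ profile X θ v → ‖v‖ ≤ C := by
  have : Nonempty ι := ⟨i⟩
  obtain ⟨C, hC⟩ := exists_forall_le_of_le_sub_exp (N := Fintype.card ι)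
    (Nat.cast_pos.2 Fintype.card_pos) (abs_sub_pos.2 hij) M
  refine ⟨C, fun θ v hM => ?_⟩
  obtain ⟨p, hp⟩ := Finite.exists_min v
  obtain ⟨q, hq⟩ := Finite.exists_max v
  have hmass := mul_exp_div_le_tentMass (fun i => X i - θ) hp q i j
  rw [sub_sub_sub_cancel_right] at hmass
  obtain ⟨hlow, hhigh⟩ :=
    hC (v p) (v q) (hp q) (hM.trans (sub_le_sub (mean_le_sub_div hq p) hmass))
  exact (pi_norm_le_iff_of_nonempty v).2 fun k =>
    abs_le.2 ⟨hlow.trans (hp k), (hq k).trans hhigh⟩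

lemma exists_forall_profile_le {X : ι → ℝ} {i j : ι} (hij : X i ≠ X j) {S : Set ℝ}
    (hS : IsCompact S) (hS' : S.Nonempty) :
    ∃ θ v, ∀ θ' ∈ S, ∀ v', profile X θ' v' ≤ profile X θ v := by
  have : Nonempty ι := ⟨i⟩
  obtain ⟨θ₀, hθ₀⟩ := hS'
  obtain ⟨C, hC⟩ := exists_norm_le_of_le_profile hij (profile X θ₀ 0)
  have hmem {v : ι → ℝ} {θ : ℝ} (hv : profile X θ₀ 0 ≤ profile X θ v) :
      v ∈ Metric.closedBall 0 C := mem_closedBall_zero_iff.2 (hC θ v hv)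
  obtain ⟨⟨θ, v⟩, -, hmax⟩ :=
    ((upperSemicontinuous_profile X).upperSemicontinuousOn _).exists_isMaxOn
      (s := S ×ˢ Metric.closedBall 0 C) ⟨(θ₀, 0), hθ₀, hmem le_rfl⟩
      (hS.prod (isCompact_closedBall 0 C))
  refine ⟨θ, v, fun θ' hθ' v' => ?_⟩
  rcases le_total (profile X θ₀ 0) (profile X θ' v') with h | h
  · exact isMaxOn_iff.1 hmax (θ', v') ⟨hθ', hmem h⟩
  · exact h.trans (isMaxOn_iff.1 hmax (θ₀, 0) ⟨hθ₀, hmem le_rfl⟩)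

end profile

lemma eIntegral_eq_coe_integral {μ : Measure ℝ} {φ : ℝ → EReal} {f : ℝ → ℝ} (hf : Integrable f μ)
    (hφ : ∀ᵐ x ∂μ, φ x = f x) : eIntegral μ φ = ((∫ x, f x ∂μ : ℝ) : EReal) := by
  have hpos : ∫⁻ x, toENN (φ x) ∂μ = ∫⁻ x, ENNReal.ofReal (f x) ∂μ :=
    lintegral_congr_ae (hφ.mono fun x hx => by simp only [hx, toENN_coe])
  have hneg : ∫⁻ x, toENN (-φ x) ∂μ = ∫⁻ x, ENNReal.ofReal (-f x) ∂μ :=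
    lintegral_congr_ae (hφ.mono fun x hx => by simp only [hx, ← EReal.coe_neg, toENN_coe])
  rw [eIntegral, hpos, hneg, integral_eq_lintegral_pos_part_sub_lintegral_neg_part hf,
    EReal.coe_sub, EReal.coe_ennreal_toReal hf.lintegral_lt_top.ne,
    EReal.coe_ennreal_toReal (show ∫⁻ x, ENNReal.ofReal (-f x) ∂μ ≠ ⊤ from
      hf.neg.lintegral_lt_top.ne)]

section empMeas

variable {n : ℕ} {X : Fin n → ℝ}

lemma ae_empMeas {p : ℝ → Prop} (h : ∀ i, p (X i)) : ∀ᵐ x ∂empMeas X, p x :=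
  Measure.ae_smul_measure (by simp [h]) _

lemma lintegral_empMeas (X : Fin n → ℝ) (f : ℝ → ℝ≥0∞) :
    ∫⁻ x, f x ∂empMeas X = (n : ℝ≥0∞)⁻¹ * ∑ i, f (X i) := by
  simp [empMeas, lintegral_finsetSum_measure]

lemma integral_empMeas (X : Fin n → ℝ) (f : ℝ → ℝ) :
    ∫ x, f x ∂empMeas X = (n : ℝ)⁻¹ * ∑ i, f (X i) := by
  rw [empMeas, integral_smul_measure,
    integral_finsetSum_measure fun _ _ => integrable_dirac (by simp)]
  simp

lemma integrable_empMeas [NeZero n] (X : Fin n → ℝ) (f : ℝ → ℝ) : Integrable f (empMeas X) :=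
  (integrable_finsetSum_measure.2 fun _ _ => integrable_dirac (by simp)).smul_measure
    (by simp [NeZero.ne n])

lemma eIntegral_empMeas_eq_bot {φ : ℝ → EReal} {i : Fin n} (h : φ (X i) = ⊥) :
    eIntegral (empMeas X) φ = ⊥ := by
  have hsum : ∑ i, toENN (-φ (X i)) = ⊤ :=
    ENNReal.sum_eq_top.2 ⟨i, Finset.mem_univ i, by simp [h, toENN]⟩
  rw [eIntegral, lintegral_empMeas X fun x => toENN (-φ x), hsum, ENNReal.mul_top (by simp),
    EReal.coe_ennreal_top, EReal.sub_top]

lemma apply_ne_bot_of_Psi_ne_bot {θ : ℝ} {ψ : ℝ → EReal} (h : Psi θ ψ (empMeas X) ≠ ⊥)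
    (i : Fin n) : ψ (X i - θ) ≠ ⊥ := fun hi => h <| by
  rw [Psi, eIntegral_empMeas_eq_bot (φ := fun x => ψ (x - θ)) hi, EReal.bot_sub]

lemma lintegral_expE_ne_top_of_Psi_ne_bot {θ : ℝ} {ψ : ℝ → EReal} {μ : Measure ℝ}
    (h : Psi θ ψ μ ≠ ⊥) : ∫⁻ x, expE (ψ x) ≠ ⊤ := fun hI => h <| by
  rw [Psi, hI, EReal.coe_ennreal_top, EReal.sub_top]

variable [NeZero n] {θ θ' : ℝ} {ψ : ℝ → EReal}

lemma Psi_empMeas (hψ : memSC0 ψ) (hbot : ∀ i, ψ (X i - θ) ≠ ⊥) (hI : ∫⁻ x, expE (ψ x) ≠ ⊤) :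
    Psi θ ψ (empMeas X) =
      ((n : ℝ)⁻¹ * ∑ i, (ψ (X i - θ)).toReal - (∫⁻ x, expE (ψ x)).toReal : ℝ) := by
  have hreal : ∀ᵐ x ∂empMeas X, ψ (x - θ) = (ψ (x - θ)).toReal :=
    ae_empMeas fun i => (EReal.coe_toReal (hψ.1 _).ne (hbot i)).symm
  rw [Psi, eIntegral_eq_coe_integral (integrable_empMeas X _) hreal, integral_empMeas,
    EReal.coe_sub, EReal.coe_ennreal_toReal hI]

lemma profile_le_Psi_tent (X : Fin n → ℝ) (θ : ℝ) (v : Fin n → ℝ) :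
    (profile X θ v : EReal) ≤ Psi θ (tent (fun i => X i - θ) v) (empMeas X) := by
  set y := fun i => X i - θ
  have htent := memSC0_tent y v
  have hbot (i : Fin n) : tent y v (X i - θ) ≠ ⊥ :=
    ((EReal.bot_lt_coe _).trans_le (le_tent y v i)).ne'
  have hle (i : Fin n) : v i ≤ (tent y v (X i - θ)).toReal := by
    rw [← EReal.coe_le_coe_iff, EReal.coe_toReal (htent.1 _).ne (hbot i)]
    exact le_tent y v i
  rw [Psi_empMeas htent hbot (lintegral_expE_tent_ne_top y v), EReal.coe_le_coe_iff, profile,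
    Fintype.card_fin]
  gcongr with i
  · exact hle i
  · exact le_rfl

lemma Psi_le_profile (hψ : memSC0 ψ) :
    Psi θ ψ (empMeas X) ≤ profile X θ fun i => (ψ (X i - θ)).toReal := by
  by_cases h : Psi θ ψ (empMeas X) = ⊥
  · exact h ▸ bot_le
  have hbot := apply_ne_bot_of_Psi_ne_bot h
  have hI := lintegral_expE_ne_top_of_Psi_ne_bot h
  have hmass : tentMass (fun i => X i - θ) (fun i => (ψ (X i - θ)).toReal) ≤ _ :=
    tentMass_le hψ hI fun i => (EReal.coe_toReal (hψ.1 _).ne (hbot i)).le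
  rw [Psi_empMeas hψ hbot hI, EReal.coe_le_coe_iff, profile, Fintype.card_fin]
  exact sub_le_sub_left hmass _

lemma Psi_lt_profile (hψ : memSC0 ψ) (h : Psi θ ψ (empMeas X) ≠ ⊥) {a : ℝ} {j : Fin n}
    (hθ' : ∀ i, |X i - θ'| ≤ |X i - θ|) (ha : ∀ i, |X i - θ'| ≤ a) (hj : a < |X j - θ|) :
    Psi θ ψ (empMeas X) < profile X θ' fun i => (ψ (X i - θ)).toReal := by
  have hbot := apply_ne_bot_of_Psi_ne_bot h
  have hI := lintegral_expE_ne_top_of_Psi_ne_bot h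
  have hmass : tentMass (fun i => X i - θ') (fun i => (ψ (X i - θ)).toReal) < _ :=
    tentMass_lt hψ hI
      (fun i => (EReal.coe_toReal (hψ.1 _).ne (hbot i)).le.trans (hψ.apply_le_of_abs_le (hθ' i)))
      ha hj (hbot j)
  rw [Psi_empMeas hψ hbot hI, EReal.coe_lt_coe_iff, profile, Fintype.card_fin]
  exact sub_lt_sub_left hmass _

end empMeas

lemma mem_Icc_sInf_sSup_range {ι : Type*} [Finite ι] (X : ι → ℝ) (k : ι) :
    X k ∈ Icc (sInf (range X)) (sSup (range X)) :=
  ⟨csInf_le (finite_range X).bddBelow ⟨k, rfl⟩, le_csSup (finite_range X).bddAbove ⟨k, rfl⟩⟩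

lemma exists_nearest_of_notMem_Icc {ι : Type*} [Finite ι] [Nonempty ι] {X : ι → ℝ} {θ : ℝ}
    (hθ : θ ∉ Icc (sInf (range X)) (sSup (range X))) :
    ∃ k j, (∀ i, |X i - X k| ≤ |X i - θ|) ∧ (∀ i, |X i - X k| ≤ |X j - X k|) ∧
      |X j - X k| < |X j - θ| := by
  obtain ⟨lo, hlo⟩ := Finite.exists_min X
  obtain ⟨hi, hhi⟩ := Finite.exists_max X
  have hout : θ < X lo ∨ X hi < θ := by
    by_contra! hin
    exact hθ ⟨(mem_Icc_sInf_sSup_range X lo).1.trans hin.1,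
      hin.2.trans (mem_Icc_sInf_sSup_range X hi).2⟩
  rcases hout with hout | hout
  · refine ⟨lo, hi, fun i => ?_, fun i => ?_, ?_⟩
    · exact abs_le_abs_of_nonneg (sub_nonneg.2 (hlo i)) (by linarith)
    · exact abs_le_abs_of_nonneg (sub_nonneg.2 (hlo i)) (by linarith [hhi i])
    · rw [abs_of_nonneg (sub_nonneg.2 (hlo hi)), abs_of_pos (by linarith [hlo hi])]
      linarith
  · refine ⟨hi, lo, fun i => ?_, fun i => ?_, ?_⟩
    · exact abs_le_abs_of_nonpos (sub_nonpos.2 (hhi i)) (by linarith)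
    · exact abs_le_abs_of_nonpos (sub_nonpos.2 (hhi i)) (by linarith [hlo i])
    · rw [abs_of_nonpos (sub_nonpos.2 (hhi lo)), abs_of_neg (by linarith [hhi lo])]
      linarith

/-- For data `X₁, …, Xₙ` not all equal, a maximizer `(θ̂ₙ, ψ̂ₙ)` of
`Ψₙ` over `ℝ × SC₀` exists, and every maximizing `θ̂ₙ` lies in `[minᵢ Xᵢ, maxᵢ Xᵢ]`. -/
theorem statement2 {n : ℕ} (X : Fin n → ℝ) (hne : ∃ i j, X i ≠ X j) :
    (∃ (θ : ℝ) (ψ : ℝ → EReal), memSC0 ψ ∧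
        ∀ (θ' : ℝ) (ψ' : ℝ → EReal), memSC0 ψ' →
          Psi θ' ψ' (empMeas X) ≤ Psi θ ψ (empMeas X)) ∧
      ∀ (θ : ℝ) (ψ : ℝ → EReal), memSC0 ψ →
        (∀ (θ' : ℝ) (ψ' : ℝ → EReal), memSC0 ψ' →
          Psi θ' ψ' (empMeas X) ≤ Psi θ ψ (empMeas X)) →
        θ ∈ Set.Icc (sInf (Set.range X)) (sSup (Set.range X)) := by
  obtain ⟨i, j, hij⟩ := hne
  have : NeZero n := i.neZero
  obtain ⟨θ₀, v₀, hmax⟩ :=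
    exists_forall_profile_le hij isCompact_Icc ⟨X i, mem_Icc_sInf_sSup_range X i⟩
  have himprove {θ ψ} (hψ : memSC0 ψ) (hbot : Psi θ ψ (empMeas X) ≠ ⊥)
      (hθ : θ ∉ Icc (sInf (range X)) (sSup (range X))) :
      Psi θ ψ (empMeas X) < profile X θ₀ v₀ := by
    obtain ⟨k, j, hnear, hfar, hlt⟩ := exists_nearest_of_notMem_Icc hθ
    exact (Psi_lt_profile hψ hbot hnear hfar hlt).trans_le
      (EReal.coe_le_coe_iff.2 (hmax _ (mem_Icc_sInf_sSup_range X k) _))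
  refine ⟨⟨θ₀, tent (fun i => X i - θ₀) v₀, memSC0_tent _ _, fun θ ψ hψ => ?_⟩,
    fun θ ψ hψ hopt => ?_⟩
  · refine le_trans ?_ (profile_le_Psi_tent X θ₀ v₀)
    by_cases hθ : θ ∈ Icc (sInf (range X)) (sSup (range X))
    · exact (Psi_le_profile hψ).trans (EReal.coe_le_coe_iff.2 (hmax θ hθ _))
    · by_cases hbot : Psi θ ψ (empMeas X) = ⊥
      · exact hbot ▸ bot_le
      · exact (himprove hψ hbot hθ).le
  · have hle := (profile_le_Psi_tent X θ₀ v₀).trans (hopt θ₀ _ (memSC0_tent _ _))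
    exact by_contra fun hθ => (himprove hψ ((EReal.bot_lt_coe _).trans_le hle).ne' hθ).not_ge hle
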